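/- Let 𝒳, 𝒴, 𝒵, ℳ be finite sets, let P_{XYZ} be a pmf, and let (M, X^n, Y^n, Z^n) be distributed according to P_{M|X^n} ∏_{i=1}^n P_{X_i Y_i Z_i}. Setting U_i := (M, Y^{i−1}, Z_{i+1}^n), it holds that ∑_{i=1}^n I(U_i; X_i | Z_i) ≤ I(M; X^n | Z^n) ≤ H(M) ≤ log|ℳ|, and likewise ∑_{i=1}^n I(U_i; X_i | Y_i) ≤ H(M) ≤ log|ℳ|. -/

import Mathlib

open scoped BigOperators

noncomputable section

open Classical in
/-- Pushforward of a finitely supported mass function along a map. -/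
def pushf {Ω α : Type*} [Fintype Ω] (p : Ω → ℝ) (f : Ω → α) : α → ℝ :=
  fun a => ∑ ω, if f ω = a then p ω else 0

/-- `p` is a probability mass function. -/
def IsPMF {α : Type*} [Fintype α] (p : α → ℝ) : Prop :=
  (∀ a, 0 ≤ p a) ∧ ∑ a, p a = 1

/-- Kullback–Leibler divergence `D(p‖q)` of mass functions, valued in `EReal`
(equal to `⊤` if `p` is not absolutely continuous w.r.t. `q`). -/
def klDiv {α : Type*} [Fintype α] (p q : α → ℝ) : EReal :=
  if ∀ a, q a = 0 → p a = 0 then ((∑ a, p a * Real.log (p a / q a) : ℝ) : EReal) else ⊤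

/-- Shannon entropy. -/
def entropy {α : Type*} [Fintype α] (p : α → ℝ) : ℝ :=
  -∑ a, p a * Real.log (p a)

/-- Conditional mutual information `I(A;B|C)` under the mass function `p`. -/
def condMI {Ω α β γ : Type*} [Fintype Ω] [Fintype α] [Fintype β] [Fintype γ]
    (p : Ω → ℝ) (A : Ω → α) (B : Ω → β) (C : Ω → γ) : ℝ :=
  entropy (pushf p (fun ω => (A ω, C ω))) + entropy (pushf p (fun ω => (B ω, C ω)))
    - entropy (pushf p (fun ω => (A ω, B ω, C ω))) - entropy (pushf p C)

/-- First marginal of a joint mass function. -/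
def margFst {α β : Type*} [Fintype α] [Fintype β] (p : α × β → ℝ) : α → ℝ :=
  fun a => ∑ b, p (a, b)

/-- Conditional mass function of the second coordinate given the first. -/
def condSnd {α β : Type*} [Fintype α] [Fintype β] (p : α × β → ℝ) : α → β → ℝ :=
  fun a b => p (a, b) / margFst p a

/-- Output distribution of a channel on an input distribution. -/
def outDist {α β : Type*} [Fintype α] [Fintype β] (ch : α → β → ℝ) (pa : α → ℝ) : β → ℝ :=
  fun b => ∑ a, pa a * ch a b

/-- The difference functional
`f(P'_X) = sup_{Q̂_X ≪ Q_X} D(P'_Y‖Q̂_Y) − D(P'_Z‖Q̂_Z)`. -/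
def fdiff {X Y Z : Type*} [Fintype X] [Fintype Y] [Fintype Z]
    (pYgX : X → Y → ℝ) (pZgX : X → Z → ℝ) (qYgX : X → Y → ℝ) (qZgX : X → Z → ℝ)
    (qX : X → ℝ) (pX' : X → ℝ) : EReal :=
  sSup {d : EReal | ∃ qhX : X → ℝ, IsPMF qhX ∧ (∀ x, qX x = 0 → qhX x = 0) ∧
    d = klDiv (outDist pYgX pX') (outDist qYgX qhX)
        - klDiv (outDist pZgX pX') (outDist qZgX qhX)}

/-- The quantity `G_{P_XY, Q_XY, P_XZ, Q_XZ}(R)`: the supremum over finite sets `𝒰`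
(represented by `Fin m`) and channels `P_{U|X}` with `I_P(U;X|Y) ≤ R` and `I_P(U;X|Z) ≤ R`
of `∑_u P_U(u) f(P_{X|U}(·|u))`. -/
def Gexp {X Y Z : Type*} [Fintype X] [Fintype Y] [Fintype Z]
    (pXY : X × Y → ℝ) (qXY : X × Y → ℝ) (pXZ : X × Z → ℝ) (qXZ : X × Z → ℝ)
    (R : ℝ) : EReal :=
  sSup {v : EReal | ∃ (m : ℕ) (ch : X → Fin m → ℝ),
    (∀ x, IsPMF (ch x)) ∧
    condMI (fun w : Fin m × X × Y => ch w.2.1 w.1 * pXY (w.2.1, w.2.2))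
      (fun w => w.1) (fun w => w.2.1) (fun w => w.2.2) ≤ R ∧
    condMI (fun w : Fin m × X × Z => ch w.2.1 w.1 * pXZ (w.2.1, w.2.2))
      (fun w => w.1) (fun w => w.2.1) (fun w => w.2.2) ≤ R ∧
    v = ∑ u : Fin m,
      ((∑ x, ch x u * margFst pXY x : ℝ) : EReal) *
        fdiff (condSnd pXY) (condSnd pXZ) (condSnd qXY) (condSnd qXZ)
          (margFst qXY)
          (fun x => ch x u * margFst pXY x / ∑ x', ch x' u * margFst pXY x')}

/-- The error exponent of distributed hypothesis testing, via the Ahlswede–Csiszár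
multi-letter characterization. -/
def errExp {X W : Type*} [Fintype X] [Fintype W]
    (pXW qXW : X × W → ℝ) (R : ℝ) : EReal :=
  sSup {v : EReal | ∃ n : ℕ, 0 < n ∧
    ∃ κ : (Fin n → X) → Fin (2 ^ ⌊(n : ℝ) * R⌋₊) → ℝ,
      (∀ x, IsPMF (κ x)) ∧
      v = (((n : ℝ)⁻¹ : ℝ) : EReal) *
        klDiv
          (fun mw : Fin (2 ^ ⌊(n : ℝ) * R⌋₊) × (Fin n → W) =>
            ∑ x : Fin n → X, (∏ i, pXW (x i, mw.2 i)) * κ x mw.1)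
          (fun mw : Fin (2 ^ ⌊(n : ℝ) * R⌋₊) × (Fin n → W) =>
            ∑ x : Fin n → X, (∏ i, qXW (x i, mw.2 i)) * κ x mw.1)}

/-!
The chain rule writes `I(M;X^n|Z^n)` as `∑_i (H(X_i|Z_i) - H(X_i|M,X^{i-1},Z^n))`, using that the
triples `(X_i,Y_i,Z_i)` are independent. By the Markov chain `M → X^n → (Y^n,Z^n)`, given
`(M,X^n,Z^n)` the `Y_j` are drawn independently, each through `(X_j,Z_j)` alone; hence `Y^{i-1}` may
be added to the conditioning in `H(X_i|M,X^{i-1},Z^n)` at no cost. Dropping `X^{i-1}` and `Z^{i-1}`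
afterwards can only increase it, to `H(X_i|U_i,Z_i)`. Reversing time gives the bound with `Y` and
`Z` exchanged.

Entropies depend on a random variable only through the partition it induces, and the argument uses
nothing but Shannon inequalities, so it is carried out for a submodular function on a semilattice.
-/

section Polymatroid

open Finset

variable {L : Type*} [SemilatticeInf L] [OrderTop L]

/-- Rank function of a polymatroid, with the order reversed: elements of `L` stand for pieces of
information and `a ⊓ b` for having both, as for partitions ordered by refinement. The case `a = b`
of submodularity says that `H` is antitone. -/
structure IsPolymatroid (H : L → ℝ) : Prop where
  map_top : H ⊤ = 0
  submodular : ∀ a b c, H (a ⊓ b ⊓ c) + H c ≤ H (a ⊓ c) + H (b ⊓ c)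

/-- The conditional rank `H(a|c)`, the lattice form of conditional entropy. -/
def condRank {L : Type*} [SemilatticeInf L] (H : L → ℝ) (a c : L) : ℝ :=
  H (a ⊓ c) - H c

/-- Mutual independence of a finite family, expressed by additivity of the rank. -/
def IsIndepFamily {J : Type*} [Fintype J] (H : L → ℝ) (f : J → L) : Prop :=
  H (univ.inf f) = ∑ j, H (f j)

theorem condRank_inf_left {L : Type*} [SemilatticeInf L] (H : L → ℝ) (a b c : L) :
    condRank H (a ⊓ b) c = condRank H b c + condRank H a (b ⊓ c) := by
  simp only [condRank, inf_assoc]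
  ring

theorem condRank_sub_condRank_comm {L : Type*} [SemilatticeInf L] (H : L → ℝ) (a b c : L) :
    condRank H a c - condRank H a (b ⊓ c) = condRank H b c - condRank H b (a ⊓ c) := by
  simp only [condRank, inf_left_comm a b c]
  ring

theorem condRank_finset_inf_eq_sum {J : Type*} [LinearOrder J] (H : L → ℝ) (f : J → L) (c : L)
    (S : Finset J) :
    condRank H (S.inf f) c = ∑ i ∈ S, condRank H (f i) ((S.filter (· < i)).inf f ⊓ c) := by
  induction S using Finset.induction_on_max with
  | empty => simp [condRank]
  | insert a S hS ih =>
    have ha : a ∉ S := fun h => lt_irrefl _ (hS a h)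
    have below_max : (insert a S).filter (· < a) = S := by
      rw [filter_insert, if_neg (lt_irrefl a), filter_true_of_mem hS]
    have below_old : ∀ i ∈ S, (insert a S).filter (· < i) = S.filter (· < i) := fun i hi => by
      rw [filter_insert, if_neg (hS i hi).not_gt]
    rw [inf_insert, condRank_inf_left, ih, sum_insert ha, below_max, add_comm]
    exact congrArg _ (sum_congr rfl fun i hi => by rw [below_old i hi])

namespace IsPolymatroid

variable {H : L → ℝ} (hH : IsPolymatroid H)

include hH

theorem condRank_top (a : L) : condRank H a ⊤ = H a := by
  simp [condRank, hH.map_top]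

theorem condRank_nonneg (a c : L) : 0 ≤ condRank H a c := by
  have h := hH.submodular a a c
  rw [inf_idem] at h
  simp only [condRank]
  linarith

theorem condRank_anti (a : L) {c d : L} (hcd : c ≤ d) : condRank H a c ≤ condRank H a d := by
  have h := hH.submodular a c d
  rw [inf_assoc, inf_eq_left.2 hcd] at h
  simp only [condRank]
  linarith

theorem condRank_finset_inf_le_sum {J : Type*} (S : Finset J) (f g : J → L) {c : L}
    (hc : ∀ j ∈ S, c ≤ g j) : condRank H (S.inf f) c ≤ ∑ j ∈ S, condRank H (f j) (g j) := by
  classical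
  induction S using Finset.induction_on with
  | empty => simp [condRank]
  | insert j S hj ih =>
    rw [forall_mem_insert] at hc
    rw [inf_insert, condRank_inf_left, sum_insert hj, add_comm]
    exact add_le_add (hH.condRank_anti _ (inf_le_right.trans hc.1)) (ih hc.2)

theorem map_finset_inf_le_sum {J : Type*} (S : Finset J) (f : J → L) :
    H (S.inf f) ≤ ∑ j ∈ S, H (f j) := by
  simpa only [hH.condRank_top] using
    hH.condRank_finset_inf_le_sum S f (fun _ => ⊤) (c := ⊤) fun _ _ => le_rfl

theorem condRank_sub_condRank_le (a b c : L) :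
    condRank H b c - condRank H b (a ⊓ c) ≤ H a := by
  rw [condRank_sub_condRank_comm, ← hH.condRank_top a]
  linarith [hH.condRank_nonneg a (b ⊓ c), hH.condRank_anti a (le_top : c ≤ ⊤)]

theorem condRank_inf_right_eq_of_pair {a b m c : L}
    (h : condRank H (a ⊓ b) (m ⊓ c) = condRank H (a ⊓ b) c) :
    condRank H a (m ⊓ (c ⊓ b)) = condRank H a (c ⊓ b) := by
  have hb : condRank H b (m ⊓ c) ≤ condRank H b c := hH.condRank_anti b inf_le_right
  have ha : condRank H a (m ⊓ (c ⊓ b)) ≤ condRank H a (c ⊓ b) := hH.condRank_anti a inf_le_right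
  rw [condRank_inf_left, condRank_inf_left, inf_left_comm b m c, inf_comm b c] at h
  linarith

section Family

variable {J : Type*} [Fintype J]

-- Two subadditivity bounds whose sum is an equality must both be equalities.
theorem isIndepFamily_left_and_condRank_eq_sum {f g : J → L}
    (h : IsIndepFamily H fun j => f j ⊓ g j) :
    IsIndepFamily H f ∧ condRank H (univ.inf g) (univ.inf f) = ∑ j, condRank H (g j) (f j) := by
  have hf : H (univ.inf f) ≤ ∑ j, H (f j) := hH.map_finset_inf_le_sum univ f
  have hg : condRank H (univ.inf g) (univ.inf f) ≤ ∑ j, condRank H (g j) (f j) :=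
    hH.condRank_finset_inf_le_sum univ g f fun _ hj => inf_le hj
  have hsum : H (univ.inf f) + condRank H (univ.inf g) (univ.inf f) =
      ∑ j, H (f j) + ∑ j, condRank H (g j) (f j) := by
    have hfg : H (univ.inf f ⊓ univ.inf g) = ∑ j, H (f j ⊓ g j) := by rwa [← Finset.inf_inf]
    simp only [condRank, sum_sub_distrib, inf_comm (univ.inf g), inf_comm (g _), hfg]
    ring
  exact ⟨by unfold IsIndepFamily; linarith, by linarith⟩

theorem condRank_finset_inf_eq_sum_of_univ {f g : J → L} {w c : L} (hw : ∀ j, w ≤ g j)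
    (hsum : condRank H (univ.inf f) w = ∑ j, condRank H (f j) (g j)) (hwc : w ≤ c)
    {S : Finset J} (hc : ∀ j ∈ S, c ≤ g j) :
    condRank H (S.inf f) c = ∑ j ∈ S, condRank H (f j) (g j) := by
  classical
  refine (hH.condRank_finset_inf_le_sum S f g hc).antisymm ?_
  have split : condRank H (univ.inf f) w =
      condRank H (S.inf f) w + condRank H (Sᶜ.inf f) (S.inf f ⊓ w) := by
    rw [← condRank_inf_left, ← inf_union, union_comm, union_compl]
  have on_compl : condRank H (Sᶜ.inf f) (S.inf f ⊓ w) ≤ ∑ j ∈ Sᶜ, condRank H (f j) (g j) :=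
    hH.condRank_finset_inf_le_sum _ f g fun j _ => inf_le_right.trans (hw j)
  linarith [hH.condRank_anti (S.inf f) hwc, sum_add_sum_compl S fun j => condRank H (f j) (g j)]

theorem condRank_finset_inf_inf_eq {f g : J → L} {w a c : L} (hw : ∀ j, w ≤ g j)
    (hsum : condRank H (univ.inf f) w = ∑ j, condRank H (f j) (g j)) (hwac : w ≤ a ⊓ c)
    {S : Finset J} (hc : ∀ j ∈ S, c ≤ g j) :
    condRank H a (S.inf f ⊓ c) = condRank H a c := by
  have without_a := hH.condRank_finset_inf_eq_sum_of_univ hw hsum (hwac.trans inf_le_right) hc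
  have with_a := hH.condRank_finset_inf_eq_sum_of_univ hw hsum hwac
    fun j hj => inf_le_right.trans (hc j hj)
  linarith [condRank_sub_condRank_comm H a (S.inf f) c]

variable [LinearOrder J]

theorem condRank_le_of_memoryless {m : L} {x y z : J → L}
    (hsum : condRank H (univ.inf y) (m ⊓ (univ.inf x ⊓ univ.inf z)) =
      ∑ j, condRank H (y j) (x j ⊓ z j)) (i : J) :
    condRank H (x i) ((univ.filter (· < i)).inf x ⊓ (m ⊓ univ.inf z)) ≤
      condRank H (x i)
        (m ⊓ ((univ.filter (· < i)).inf y ⊓ (univ.filter (i < ·)).inf z) ⊓ z i) := by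
  set past := univ.filter (· < i)
  set future := univ.filter (i < ·)
  have hz : ∀ j, univ.inf z ≤ z j := fun j => inf_le (mem_univ j)
  have hx : univ.inf x ≤ x i ⊓ past.inf x :=
    le_inf (inf_le (mem_univ i)) (inf_mono (subset_univ past))
  have drop_past_y : condRank H (x i) (past.inf y ⊓ (past.inf x ⊓ (m ⊓ univ.inf z))) =
      condRank H (x i) (past.inf x ⊓ (m ⊓ univ.inf z)) := by
    refine hH.condRank_finset_inf_inf_eq
      (fun j => inf_le_right.trans (inf_le_inf (inf_le (mem_univ j)) (hz j))) hsum ?_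
      fun j hj => inf_le_inf (inf_le hj) (inf_le_right.trans (hz j))
    rw [inf_left_comm, ← inf_assoc (x i)]
    exact inf_le_inf_right _ hx
  rw [← drop_past_y]
  refine hH.condRank_anti _ ?_
  have le_future : univ.inf z ≤ future.inf z ⊓ z i := le_inf (inf_mono (subset_univ _)) (hz i)
  calc past.inf y ⊓ (past.inf x ⊓ (m ⊓ univ.inf z))
      ≤ past.inf y ⊓ (m ⊓ (future.inf z ⊓ z i)) :=
        inf_le_inf_left _ (inf_le_right.trans (inf_le_inf_left m le_future))
    _ = m ⊓ (past.inf y ⊓ future.inf z) ⊓ z i := by ac_rfl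

theorem sum_condRank_sub_le {m : L} {x y z : J → L}
    (hmarkov : condRank H (univ.inf y ⊓ univ.inf z) (m ⊓ univ.inf x) =
      condRank H (univ.inf y ⊓ univ.inf z) (univ.inf x))
    (hindep : IsIndepFamily H fun j => x j ⊓ (y j ⊓ z j)) :
    ∑ i, (condRank H (x i) (z i) - condRank H (x i)
        (m ⊓ ((univ.filter (· < i)).inf y ⊓ (univ.filter (i < ·)).inf z) ⊓ z i)) ≤
      condRank H (univ.inf x) (univ.inf z) - condRank H (univ.inf x) (m ⊓ univ.inf z) := by
  have indep_xzy : IsIndepFamily H fun j => x j ⊓ z j ⊓ y j := by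
    simpa only [inf_assoc, inf_comm (y _)] using hindep
  have indep_zx : IsIndepFamily H fun j => z j ⊓ x j := by
    simpa only [inf_comm (z _)] using (hH.isIndepFamily_left_and_condRank_eq_sum indep_xzy).1
  have x_given_z := (hH.isIndepFamily_left_and_condRank_eq_sum indep_zx).2
  have y_given_mxz : condRank H (univ.inf y) (m ⊓ (univ.inf x ⊓ univ.inf z)) =
      ∑ j, condRank H (y j) (x j ⊓ z j) := by
    rw [hH.condRank_inf_right_eq_of_pair hmarkov, ← Finset.inf_inf]
    exact (hH.isIndepFamily_left_and_condRank_eq_sum indep_xzy).2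
  rw [sum_sub_distrib, x_given_z, condRank_finset_inf_eq_sum H x]
  exact sub_le_sub_left (sum_le_sum fun i _ => hH.condRank_le_of_memoryless y_given_mxz i) _

end Family

end IsPolymatroid

end Polymatroid

section Pushforward

variable {Ω α β γ : Type*} [Fintype Ω] {p : Ω → ℝ}

theorem pushf_nonneg (hp : ∀ ω, 0 ≤ p ω) (f : Ω → α) (a : α) : 0 ≤ pushf p f a :=
  Finset.sum_nonneg fun ω _ => by split_ifs <;> simp [hp]

theorem le_pushf_apply (hp : ∀ ω, 0 ≤ p ω) (f : Ω → α) (ω : Ω) : p ω ≤ pushf p f (f ω) := by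
  classical
  simpa [pushf] using Finset.single_le_sum (f := fun ω' => if f ω' = f ω then p ω' else 0)
    (fun ω' _ => by split_ifs <;> simp [hp]) (Finset.mem_univ ω)

theorem pushf_apply_pos (hp : ∀ ω, 0 ≤ p ω) (f : Ω → α) {ω : Ω} (hω : 0 < p ω) :
    0 < pushf p f (f ω) :=
  hω.trans_le (le_pushf_apply hp f ω)

theorem pushf_apply_of_injective (p : Ω → ℝ) {f : Ω → α} (hf : f.Injective) (ω : Ω) :
    pushf p f (f ω) = p ω := by
  classical
  simp [pushf, hf.eq_iff]

variable [Fintype α]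

theorem sum_pushf_mul (p : Ω → ℝ) (f : Ω → α) (F : α → ℝ) :
    ∑ a, pushf p f a * F a = ∑ ω, p ω * F (f ω) := by
  classical
  simp only [pushf, Finset.sum_mul, ite_mul, zero_mul]
  rw [Finset.sum_comm]
  simp

theorem sum_pushf (p : Ω → ℝ) (f : Ω → α) : ∑ a, pushf p f a = ∑ ω, p ω := by
  simpa using sum_pushf_mul p f fun _ => 1

theorem IsPMF.pushf (hp : IsPMF p) (f : Ω → α) : IsPMF (pushf p f) :=
  ⟨pushf_nonneg hp.1 f, (sum_pushf p f).trans hp.2⟩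

theorem pushf_pushf (p : Ω → ℝ) (f : Ω → α) (g : α → β) :
    pushf (pushf p f) g = pushf p fun ω => g (f ω) := by
  classical
  ext b
  simpa [pushf] using sum_pushf_mul p f fun a => if g a = b then 1 else 0

theorem sum_pushf_prodMk (p : Ω → ℝ) (f : Ω → α) (g : Ω → β) (b : β) :
    ∑ a, pushf p (fun ω => (f ω, g ω)) (a, b) = pushf p g b := by
  classical
  simp only [pushf, Prod.mk.injEq, ite_and]
  rw [Finset.sum_comm]
  simp

theorem sum_pushf_prodMk_mid (p : Ω → ℝ) (f : Ω → α) (g : Ω → β) (h : Ω → γ) (b : β) (c : γ) :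
    ∑ a, pushf p (fun ω => (g ω, f ω, h ω)) (b, a, c) = pushf p (fun ω => (g ω, h ω)) (b, c) := by
  classical
  rw [← sum_pushf_prodMk p f]
  simp only [pushf, Prod.mk.injEq, and_left_comm]

end Pushforward

section Entropy

variable {Ω α β γ : Type*} [Fintype Ω] [Fintype α] [Fintype β] [Fintype γ] {p : Ω → ℝ}

theorem entropy_pushf (p : Ω → ℝ) (f : Ω → α) :
    entropy (pushf p f) = -∑ ω, p ω * Real.log (pushf p f (f ω)) :=
  congrArg Neg.neg (sum_pushf_mul p f fun a => Real.log (pushf p f a))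

theorem entropy_le_log_card {q : α → ℝ} (hq : IsPMF q) :
    entropy q ≤ Real.log (Fintype.card α) := by
  have : Nonempty α := by
    by_contra h
    simpa [not_nonempty_iff.1 h] using hq.2
  have card_pos : (0 : ℝ) < Fintype.card α := by exact_mod_cast Fintype.card_pos
  have jensen := Real.concaveOn_negMulLog.le_map_sum (t := Finset.univ)
    (w := fun _ : α => (Fintype.card α : ℝ)⁻¹) (p := q) (fun _ _ => by positivity)
    (by simp) fun a _ => hq.1 a
  simp only [smul_eq_mul, ← Finset.mul_sum, hq.2, mul_one, Real.negMulLog_eq_neg, Real.log_inv,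
    Finset.sum_neg_distrib, mul_neg, neg_neg] at jensen
  exact le_of_mul_le_mul_left (by simpa [entropy] using jensen) (inv_pos.2 card_pos)

theorem condMI_eq_sum_mul_log (hp : ∀ ω, 0 ≤ p ω) (A : Ω → α) (B : Ω → β) (C : Ω → γ) :
    condMI p A B C = ∑ ω, p ω * Real.log
      (pushf p (fun ω => (A ω, B ω, C ω)) (A ω, B ω, C ω) * pushf p C (C ω) /
        (pushf p (fun ω => (A ω, C ω)) (A ω, C ω) * pushf p (fun ω => (B ω, C ω)) (B ω, C ω))) := by
  simp only [condMI, entropy_pushf, ← Finset.sum_neg_distrib, ← Finset.sum_add_distrib,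
    ← Finset.sum_sub_distrib]
  refine Finset.sum_congr rfl fun ω _ => ?_
  rcases (hp ω).eq_or_lt with h | h
  · simp [← h]
  · have hABC := pushf_apply_pos hp (fun ω => (A ω, B ω, C ω)) h
    have hAC := pushf_apply_pos hp (fun ω => (A ω, C ω)) h
    have hBC := pushf_apply_pos hp (fun ω => (B ω, C ω)) h
    have hC := pushf_apply_pos hp C h
    rw [Real.log_div (mul_pos hABC hC).ne' (mul_pos hAC hBC).ne', Real.log_mul hABC.ne' hC.ne',
      Real.log_mul hAC.ne' hBC.ne']
    ring

theorem sum_pushf_mul_pushf_div_pushf (p : Ω → ℝ) (A : Ω → α) (B : Ω → β) (C : Ω → γ) :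
    ∑ u : α × β × γ, pushf p (fun ω => (A ω, C ω)) (u.1, u.2.2) *
      pushf p (fun ω => (B ω, C ω)) (u.2.1, u.2.2) / pushf p C u.2.2 = ∑ ω, p ω := by
  set pAC := pushf p fun ω => (A ω, C ω)
  set pBC := pushf p fun ω => (B ω, C ω)
  set pC := pushf p C
  calc ∑ u : α × β × γ, pAC (u.1, u.2.2) * pBC (u.2.1, u.2.2) / pC u.2.2
      = ∑ c, (∑ a, pAC (a, c)) * (∑ b, pBC (b, c)) / pC c := by
        simp only [Fintype.sum_prod_type, Finset.sum_mul_sum, Finset.sum_div]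
        exact Finset.sum_comm_cycle
    _ = ∑ c, pC c := by simp only [pAC, pBC, pC, sum_pushf_prodMk, mul_self_div_self]
    _ = ∑ ω, p ω := sum_pushf p C

theorem condMI_nonneg (hp : ∀ ω, 0 ≤ p ω) (A : Ω → α) (B : Ω → β) (C : Ω → γ) :
    0 ≤ condMI p A B C := by
  set pAC := pushf p fun ω => (A ω, C ω) with hAC
  set pBC := pushf p fun ω => (B ω, C ω) with hBC
  set pABC := pushf p fun ω => (A ω, B ω, C ω) with hABC
  set pC := pushf p C with hC
  have sum_ratio_le : ∑ ω, p ω * (pAC (A ω, C ω) * pBC (B ω, C ω) /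
      (pABC (A ω, B ω, C ω) * pC (C ω))) ≤ ∑ ω, p ω := by
    rw [← sum_pushf_mul p (fun ω => (A ω, B ω, C ω))
      fun u => pAC (u.1, u.2.2) * pBC (u.2.1, u.2.2) / (pABC u * pC u.2.2),
      ← sum_pushf_mul_pushf_div_pushf p A B C, ← hABC]
    refine Finset.sum_le_sum fun u _ => ?_
    rcases eq_or_ne (pABC u) 0 with h | h
    · rw [h, zero_mul]
      exact div_nonneg (mul_nonneg (pushf_nonneg hp _ _) (pushf_nonneg hp _ _))
        (pushf_nonneg hp _ _)
    · rw [← mul_div_assoc, mul_div_mul_left _ _ h]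
  rw [condMI_eq_sum_mul_log hp, ← hAC, ← hBC, ← hABC, ← hC]
  refine (sub_nonneg.2 sum_ratio_le).trans ?_
  rw [← Finset.sum_sub_distrib]
  refine Finset.sum_le_sum fun ω _ => ?_
  rcases (hp ω).eq_or_lt with h | h
  · simp [← h]
  · have ratio_pos : 0 < pABC (A ω, B ω, C ω) * pC (C ω) / (pAC (A ω, C ω) * pBC (B ω, C ω)) :=
      div_pos (mul_pos (pushf_apply_pos hp (fun ω => (A ω, B ω, C ω)) h) (pushf_apply_pos hp C h))
        (mul_pos (pushf_apply_pos hp (fun ω => (A ω, C ω)) h)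
          (pushf_apply_pos hp (fun ω => (B ω, C ω)) h))
    rw [← mul_one_sub, ← inv_div (_ * _)]
    exact mul_le_mul_of_nonneg_left (Real.one_sub_inv_le_log_of_pos ratio_pos) h.le

theorem condMI_eq_zero_of_kernel (hp : ∀ ω, 0 ≤ p ω) {A : Ω → α} {B : Ω → β} {C : Ω → γ}
    (κ : γ → α → ℝ) (hκ : ∀ a b c, pushf p (fun ω => (A ω, B ω, C ω)) (a, b, c) =
      κ c a * pushf p (fun ω => (B ω, C ω)) (b, c)) :
    condMI p A B C = 0 := by
  have hAC : ∀ a c, pushf p (fun ω => (A ω, C ω)) (a, c) = κ c a * pushf p C c := fun a c => by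
    rw [← sum_pushf_prodMk_mid p B, ← sum_pushf_prodMk p B C, Finset.mul_sum]
    exact Finset.sum_congr rfl fun b _ => hκ a b c
  rw [condMI_eq_sum_mul_log hp]
  refine Finset.sum_eq_zero fun ω _ => ?_
  rw [hκ, hAC, mul_right_comm, Real.log_div_self, mul_zero]

end Entropy

section PartitionEntropy

variable {Ω : Type*}

theorem ker_prodMk {α β : Type*} (f : Ω → α) (g : Ω → β) :
    Setoid.ker (fun ω => (f ω, g ω)) = Setoid.ker f ⊓ Setoid.ker g := by
  ext a b
  simp [Setoid.ker_def, Setoid.inf_iff_and]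

theorem setoid_finset_inf_iff {J : Type*} (S : Finset J) (r : J → Setoid Ω) {a b : Ω} :
    S.inf r a b ↔ ∀ j ∈ S, r j a b := by
  classical
  induction S using Finset.induction_on with
  | empty => exact iff_of_true trivial (by simp)
  | insert j S _ ih => rw [Finset.inf_insert, Setoid.inf_iff_and, ih, Finset.forall_mem_insert]

theorem ker_pi {J : Type*} [Fintype J] {α : J → Type*} (f : Ω → ∀ j, α j) :
    Setoid.ker f = Finset.univ.inf fun j => Setoid.ker fun ω => f ω j := by
  ext a b
  simp [setoid_finset_inf_iff, Setoid.ker_def, funext_iff]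

theorem ker_subtype_pi {J : Type*} [Fintype J] {α : J → Type*} (q : J → Prop) [DecidablePred q]
    (f : Ω → ∀ j, α j) :
    Setoid.ker (fun ω (j : {j // q j}) => f ω j) =
      (Finset.univ.filter q).inf fun j => Setoid.ker fun ω => f ω j := by
  ext a b
  simp [setoid_finset_inf_iff, Setoid.ker_def, funext_iff]

variable [Fintype Ω]

open Classical in
/-- Entropy of the partition of `Ω` into the classes of `r`. The entropy of a random variable
depends only on its kernel, so this puts random variables of different types into one lattice. -/
def partitionEntropy (p : Ω → ℝ) (r : Setoid Ω) : ℝ :=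
  -∑ ω, p ω * Real.log (∑ ω', if r ω' ω then p ω' else 0)

theorem entropy_pushf_eq_partitionEntropy {α : Type*} [Fintype α] (p : Ω → ℝ) (f : Ω → α) :
    entropy (pushf p f) = partitionEntropy p (Setoid.ker f) :=
  entropy_pushf p f

theorem isIndepFamily_ker_of_pushf_eq_prod {J : Type*} [Fintype J] {α : J → Type*} {p : Ω → ℝ}
    (hp : ∀ ω, 0 ≤ p ω) {t : Ω → ∀ j, α j}
    (ht : ∀ u, pushf p t u = ∏ j, pushf p (fun ω => t ω j) (u j)) :
    IsIndepFamily (partitionEntropy p) fun j => Setoid.ker fun ω => t ω j := by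
  have term_eq (ω : Ω) : p ω * Real.log (pushf p t (t ω)) =
      ∑ j, p ω * Real.log (pushf p (fun ω' => t ω' j) (t ω j)) := by
    rcases (hp ω).eq_or_lt with h | h
    · simp [← h]
    · rw [ht, Real.log_prod fun j _ => (pushf_apply_pos hp (fun ω => t ω j) h).ne',
        Finset.mul_sum]
  calc partitionEntropy p (Finset.univ.inf fun j => Setoid.ker fun ω => t ω j)
      = -∑ ω, p ω * Real.log (pushf p t (t ω)) := by rw [← ker_pi]; rfl
    _ = ∑ j, -∑ ω, p ω * Real.log (pushf p (fun ω' => t ω' j) (t ω j)) := by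
      simp only [term_eq, Finset.sum_neg_distrib]
      rw [Finset.sum_comm]

theorem condMI_eq_condRank_sub {α β γ : Type*} [Fintype α] [Fintype β] [Fintype γ] (p : Ω → ℝ)
    (A : Ω → α) (B : Ω → β) (C : Ω → γ) :
    condMI p A B C = condRank (partitionEntropy p) (Setoid.ker B) (Setoid.ker C) -
      condRank (partitionEntropy p) (Setoid.ker B) (Setoid.ker A ⊓ Setoid.ker C) := by
  simp only [condMI, condRank, entropy_pushf_eq_partitionEntropy, ker_prodMk,
    inf_left_comm (Setoid.ker B)]
  ring

theorem isPolymatroid_partitionEntropy {p : Ω → ℝ} (hp : IsPMF p) :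
    IsPolymatroid (partitionEntropy p) where
  map_top := by simp [partitionEntropy, Setoid.top_def, hp.2]
  submodular a b c := by
    classical
    have h := condMI_nonneg hp.1 (Quotient.mk a) (Quotient.mk b) (Quotient.mk c)
    have ker_mk (r : Setoid Ω) : Setoid.ker (Quotient.mk r) = r := Setoid.ker_mk_eq r
    simp only [condMI_eq_condRank_sub, ker_mk, condRank, inf_left_comm b a] at h
    rw [inf_assoc]
    linarith

theorem condMI_le_entropy {α β γ : Type*} [Fintype α] [Fintype β] [Fintype γ] {p : Ω → ℝ}
    (hp : IsPMF p) (A : Ω → α) (B : Ω → β) (C : Ω → γ) : condMI p A B C ≤ entropy (pushf p A) := by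
  rw [condMI_eq_condRank_sub, entropy_pushf_eq_partitionEntropy]
  exact (isPolymatroid_partitionEntropy hp).condRank_sub_condRank_le _ _ _

end PartitionEntropy

section AuxiliaryVariable

variable {Ω J X Y Z M : Type*} [Fintype J] [LinearOrder J]

/-- The auxiliary random variable `U_i = (M, Y^{i-1}, Z_{i+1}^n)`. -/
def auxVar (m : Ω → M) (y : Ω → J → Y) (z : Ω → J → Z) (i : J) (ω : Ω) :
    M × ({j : J // j < i} → Y) × ({j : J // i < j} → Z) :=
  (m ω, fun j => y ω j, fun j => z ω j)

theorem ker_auxVar (m : Ω → M) (y : Ω → J → Y) (z : Ω → J → Z) (i : J) :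
    Setoid.ker (auxVar m y z i) = Setoid.ker m ⊓
      ((Finset.univ.filter (· < i)).inf (fun j => Setoid.ker fun ω => y ω j) ⊓
        (Finset.univ.filter (i < ·)).inf fun j => Setoid.ker fun ω => z ω j) := by
  rw [← ker_subtype_pi, ← ker_subtype_pi, ← ker_prodMk, ← ker_prodMk]
  rfl

variable [Fintype Ω] [Fintype X] [Fintype Y] [Fintype Z] [Fintype M] {p : Ω → ℝ}
  {m : Ω → M} {x : Ω → J → X} {y : Ω → J → Y} {z : Ω → J → Z}

theorem condRank_ker_eq_of_condMI_eq_zero (hmarkov : condMI p m (fun ω => (y ω, z ω)) x = 0) :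
    condRank (partitionEntropy p) (Finset.univ.inf (fun j => Setoid.ker fun ω => y ω j) ⊓
        Finset.univ.inf fun j => Setoid.ker fun ω => z ω j)
      (Setoid.ker m ⊓ Finset.univ.inf fun j => Setoid.ker fun ω => x ω j) =
    condRank (partitionEntropy p) (Finset.univ.inf (fun j => Setoid.ker fun ω => y ω j) ⊓
        Finset.univ.inf fun j => Setoid.ker fun ω => z ω j)
      (Finset.univ.inf fun j => Setoid.ker fun ω => x ω j) := by
  rw [condMI_eq_condRank_sub, ker_prodMk, ker_pi x, ker_pi y, ker_pi z] at hmarkov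
  exact (sub_eq_zero.1 hmarkov).symm

theorem sum_condMI_auxVar_right_le (hp : IsPMF p)
    (hmarkov : condMI p m (fun ω => (y ω, z ω)) x = 0)
    (hindep : ∀ u, pushf p (fun ω j => (x ω j, y ω j, z ω j)) u =
      ∏ j, pushf p (fun ω => (x ω j, y ω j, z ω j)) (u j)) :
    ∑ i, condMI p (auxVar m y z i) (fun ω => x ω i) (fun ω => z ω i) ≤ condMI p m x z := by
  have indep_ker := isIndepFamily_ker_of_pushf_eq_prod hp.1 hindep
  simp only [ker_prodMk] at indep_ker
  simp only [condMI_eq_condRank_sub, ker_auxVar, ker_pi x, ker_pi z]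
  exact (isPolymatroid_partitionEntropy hp).sum_condRank_sub_le
    (condRank_ker_eq_of_condMI_eq_zero hmarkov) indep_ker

theorem sum_condMI_auxVar_left_le (hp : IsPMF p)
    (hmarkov : condMI p m (fun ω => (y ω, z ω)) x = 0)
    (hindep : ∀ u, pushf p (fun ω j => (x ω j, y ω j, z ω j)) u =
      ∏ j, pushf p (fun ω => (x ω j, y ω j, z ω j)) (u j)) :
    ∑ i, condMI p (auxVar m y z i) (fun ω => x ω i) (fun ω => y ω i) ≤ condMI p m x y := by
  have markov_ker := condRank_ker_eq_of_condMI_eq_zero hmarkov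
  have indep_ker := isIndepFamily_ker_of_pushf_eq_prod hp.1 hindep
  rw [inf_comm (Finset.univ.inf fun j => Setoid.ker fun ω => y ω j)] at markov_ker
  simp only [ker_prodMk, inf_comm (Setoid.ker fun ω => y ω _)] at indep_ker
  simp only [condMI_eq_condRank_sub, ker_auxVar, ker_pi x, ker_pi y,
    inf_comm (Finset.inf _ fun j => Setoid.ker fun ω => y ω j)]
  -- Reversing the order of `J` exchanges the roles of `y` and `z`.
  exact (isPolymatroid_partitionEntropy hp).sum_condRank_sub_le (J := Jᵒᵈ) markov_ker indep_ker

theorem rate_constraints_aux_general (hp : IsPMF p)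
    (hmarkov : condMI p m (fun ω => (y ω, z ω)) x = 0)
    (hindep : ∀ u, pushf p (fun ω j => (x ω j, y ω j, z ω j)) u =
      ∏ j, pushf p (fun ω => (x ω j, y ω j, z ω j)) (u j)) :
    ∑ i, condMI p (auxVar m y z i) (fun ω => x ω i) (fun ω => z ω i) ≤ condMI p m x z ∧
    condMI p m x z ≤ entropy (pushf p m) ∧
    entropy (pushf p m) ≤ Real.log (Fintype.card M) ∧
    ∑ i, condMI p (auxVar m y z i) (fun ω => x ω i) (fun ω => y ω i) ≤ entropy (pushf p m) :=
  ⟨sum_condMI_auxVar_right_le hp hmarkov hindep, condMI_le_entropy hp m x z,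
    entropy_le_log_card (hp.pushf m),
    (sum_condMI_auxVar_left_le hp hmarkov hindep).trans (condMI_le_entropy hp m x y)⟩

end AuxiliaryVariable

section ProductMass

variable {J : Type*} [Fintype J] {α : J → Type*} [∀ j, Fintype (α j)] {q : ∀ j, α j → ℝ}

theorem isPMF_pi [DecidableEq J] (hq : ∀ j, IsPMF (q j)) :
    IsPMF fun u : ∀ j, α j => ∏ j, q j (u j) :=
  ⟨fun u => Finset.prod_nonneg fun j _ => (hq j).1 (u j), by
    rw [← Fintype.prod_sum]
    exact Finset.prod_eq_one fun j _ => (hq j).2⟩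

theorem pushf_pi_eval [DecidableEq J] (hq : ∀ j, ∑ a, q j a = 1) (i : J) :
    pushf (fun u : ∀ j, α j => ∏ j, q j (u j)) (fun u => u i) = q i := by
  classical
  ext a
  let restricted : ∀ j, α j → ℝ := Function.update q i fun b => if b = a then q i b else 0
  have restricted_self : restricted i = fun b => if b = a then q i b else 0 :=
    Function.update_self ..
  have restricted_of_ne {j : J} (hj : j ≠ i) : restricted j = q j := Function.update_of_ne hj ..
  have prod_restricted (u : ∀ j, α j) :
      (if u i = a then ∏ j, q j (u j) else 0) = ∏ j, restricted j (u j) := by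
    have off_i : ∏ j ∈ {i}ᶜ, restricted j (u j) = ∏ j ∈ {i}ᶜ, q j (u j) :=
      Finset.prod_congr rfl fun j hj => by rw [restricted_of_ne (by simpa using hj)]
    rw [Fintype.prod_eq_mul_prod_compl i, Fintype.prod_eq_mul_prod_compl i, off_i, restricted_self,
      ite_mul, zero_mul]
  simp only [pushf, prod_restricted]
  rw [← Fintype.prod_sum, Fintype.prod_eq_single i fun j hj => by rw [restricted_of_ne hj, hq]]
  simp [restricted_self]

theorem pushf_eq_prod_pushf {Ω : Type*} [Fintype Ω] {p : Ω → ℝ} {t : Ω → ∀ j, α j}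
    (hq : ∀ j, ∑ a, q j a = 1) (ht : pushf p t = fun u => ∏ j, q j (u j)) (u : ∀ j, α j) :
    pushf p t u = ∏ j, pushf p (fun ω => t ω j) (u j) := by
  classical
  have marginal (j : J) : pushf p (fun ω => t ω j) = q j := by
    rw [← pushf_pushf p t fun u => u j, ht, pushf_pi_eval hq]
  simp only [ht, marginal]

end ProductMass

section AttachKernel

variable {α β γ : Type*} {κ : β → α → ℝ} {q : β × γ → ℝ}

/-- Joint mass function of `(A, B, C)` when `(B, C)` has mass function `q` and `A` is drawn from
`κ B`, so that `A → B → C` is a Markov chain. -/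
def attachKernel (κ : β → α → ℝ) (q : β × γ → ℝ) (w : α × β × γ) : ℝ :=
  κ w.2.1 w.1 * q w.2

variable [Fintype α] [Fintype β] [Fintype γ]

theorem pushf_attachKernel_snd (hκ : ∀ b, ∑ a, κ b a = 1) (q : β × γ → ℝ) :
    pushf (attachKernel κ q) Prod.snd = q := by
  classical
  ext v
  simp only [pushf, attachKernel, Fintype.sum_prod_type_right (α₁ := α), Finset.sum_ite_irrel,
    ← Finset.sum_mul, hκ]
  simp

theorem isPMF_attachKernel (hκ : ∀ b, IsPMF (κ b)) (hq : IsPMF q) : IsPMF (attachKernel κ q) := by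
  refine ⟨fun w => mul_nonneg ((hκ _).1 _) (hq.1 _), ?_⟩
  rw [← sum_pushf _ Prod.snd, pushf_attachKernel_snd fun b => (hκ b).2, hq.2]

theorem condMI_attachKernel (hκ : ∀ b, IsPMF (κ b)) (hq : IsPMF q) :
    condMI (attachKernel κ q) (fun w => w.1) (fun w => w.2.2) (fun w => w.2.1) = 0 := by
  refine condMI_eq_zero_of_kernel (isPMF_attachKernel hκ hq).1 κ fun a b c => ?_
  have swap_injective : Function.Injective fun w : α × β × γ => (w.1, w.2.2, w.2.1) :=
    fun w w' h => by simp_all [Prod.ext_iff]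
  rw [← pushf_pushf _ Prod.snd fun v : β × γ => (v.2, v.1),
    pushf_attachKernel_snd fun b => (hκ b).2]
  exact (pushf_apply_of_injective _ swap_injective (a, c, b)).trans
    (congrArg (κ c a * ·) (pushf_apply_of_injective q Prod.swap_injective (c, b)).symm)

end AttachKernel

section Memoryless

variable {J X Y Z M : Type*} [Fintype J] [DecidableEq J] [Fintype X] [Fintype Y] [Fintype Z]
  {P : J → X × Y × Z → ℝ}

/-- The law of `(X^n, Y^n, Z^n)` when the triples `(X_j, Y_j, Z_j)` are independent with laws
`P j`. -/
def memorylessLaw (P : J → X × Y × Z → ℝ) (v : (J → X) × (J → Y) × (J → Z)) : ℝ :=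
  ∏ j, P j (v.1 j, v.2.1 j, v.2.2 j)

theorem pushf_memorylessLaw (P : J → X × Y × Z → ℝ) :
    pushf (memorylessLaw P) (fun v j => (v.1 j, v.2.1 j, v.2.2 j)) =
      fun u => ∏ j, P j (u j) := by
  have zip_injective : Function.Injective
      fun (v : (J → X) × (J → Y) × (J → Z)) j => (v.1 j, v.2.1 j, v.2.2 j) := fun v w h => by
    simpa [funext_iff, Prod.ext_iff, forall_and] using h
  ext u
  exact pushf_apply_of_injective (memorylessLaw P) zip_injective
    (fun j => (u j).1, fun j => (u j).2.1, fun j => (u j).2.2)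

theorem isPMF_memorylessLaw (hP : ∀ j, IsPMF (P j)) : IsPMF (memorylessLaw P) := by
  refine ⟨fun v => Finset.prod_nonneg fun j _ => (hP j).1 _, ?_⟩
  rw [← sum_pushf _ fun v j => (v.1 j, v.2.1 j, v.2.2 j), pushf_memorylessLaw]
  exact (isPMF_pi hP).2

theorem pushf_attachKernel_memorylessLaw [Fintype M] {κ : (J → X) → M → ℝ}
    (hκ : ∀ x, ∑ a, κ x a = 1) (P : J → X × Y × Z → ℝ) :
    pushf (attachKernel κ (memorylessLaw P)) (fun w j => (w.2.1 j, w.2.2.1 j, w.2.2.2 j)) =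
      fun u => ∏ j, P j (u j) := by
  rw [← pushf_memorylessLaw P, ← pushf_attachKernel_snd hκ (memorylessLaw P), pushf_pushf,
    pushf_attachKernel_snd hκ]

end Memoryless

/-- With `U_i = (M, Y^{i-1}, Z_{i+1}^n)`:
`∑_i I(U_i;X_i|Z_i) ≤ I(M;X^n|Z^n) ≤ H(M) ≤ log|ℳ|` and
`∑_i I(U_i;X_i|Y_i) ≤ H(M) ≤ log|ℳ|`. -/
theorem rate_constraints_aux {X Y Z M : Type*}
    [Fintype X] [Fintype Y] [Fintype Z] [Fintype M] (n : ℕ)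
    (P : X × Y × Z → ℝ) (hP : IsPMF P)
    (κ : (Fin n → X) → M → ℝ) (hκ : ∀ x, IsPMF (κ x)) :
    (∑ i : Fin n,
        condMI
          (fun w : M × (Fin n → X) × (Fin n → Y) × (Fin n → Z) =>
            κ w.2.1 w.1 * ∏ j, P (w.2.1 j, w.2.2.1 j, w.2.2.2 j))
          (fun w => (w.1, fun j : {j : Fin n // (j : ℕ) < (i : ℕ)} => w.2.2.1 j.1,
            fun j : {j : Fin n // (i : ℕ) < (j : ℕ)} => w.2.2.2 j.1))
          (fun w => w.2.1 i) (fun w => w.2.2.2 i)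
      ≤ condMI
          (fun w : M × (Fin n → X) × (Fin n → Y) × (Fin n → Z) =>
            κ w.2.1 w.1 * ∏ j, P (w.2.1 j, w.2.2.1 j, w.2.2.2 j))
          (fun w => w.1) (fun w => w.2.1) (fun w => w.2.2.2)) ∧
    (condMI
        (fun w : M × (Fin n → X) × (Fin n → Y) × (Fin n → Z) =>
          κ w.2.1 w.1 * ∏ j, P (w.2.1 j, w.2.2.1 j, w.2.2.2 j))
        (fun w => w.1) (fun w => w.2.1) (fun w => w.2.2.2)
      ≤ entropy (pushf
          (fun w : M × (Fin n → X) × (Fin n → Y) × (Fin n → Z) =>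
            κ w.2.1 w.1 * ∏ j, P (w.2.1 j, w.2.2.1 j, w.2.2.2 j))
          (fun w => w.1))) ∧
    (entropy (pushf
        (fun w : M × (Fin n → X) × (Fin n → Y) × (Fin n → Z) =>
          κ w.2.1 w.1 * ∏ j, P (w.2.1 j, w.2.2.1 j, w.2.2.2 j))
        (fun w => w.1)) ≤ Real.log (Fintype.card M)) ∧
    (∑ i : Fin n,
        condMI
          (fun w : M × (Fin n → X) × (Fin n → Y) × (Fin n → Z) =>
            κ w.2.1 w.1 * ∏ j, P (w.2.1 j, w.2.2.1 j, w.2.2.2 j))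
          (fun w => (w.1, fun j : {j : Fin n // (j : ℕ) < (i : ℕ)} => w.2.2.1 j.1,
            fun j : {j : Fin n // (i : ℕ) < (j : ℕ)} => w.2.2.2 j.1))
          (fun w => w.2.1 i) (fun w => w.2.2.1 i)
      ≤ entropy (pushf
          (fun w : M × (Fin n → X) × (Fin n → Y) × (Fin n → Z) =>
            κ w.2.1 w.1 * ∏ j, P (w.2.1 j, w.2.2.1 j, w.2.2.2 j))
          (fun w => w.1))) :=
  rate_constraints_aux_general
    (p := attachKernel κ (memorylessLaw fun _ => P)) (m := fun w => w.1)
    (x := fun w => w.2.1) (y := fun w => w.2.2.1) (z := fun w => w.2.2.2)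
    (isPMF_attachKernel hκ (isPMF_memorylessLaw fun _ => hP))
    (condMI_attachKernel hκ (isPMF_memorylessLaw fun _ => hP))
    (pushf_eq_prod_pushf (fun _ => hP.2)
      (pushf_attachKernel_memorylessLaw (fun x => (hκ x).2) fun _ => P))

end
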